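/- Suppose in addition that p(θ + π/2) = R(p(θ)) for all θ, where R(x, y) := (−y, x) is the rotation by π/2 (i.e., the unit circle of 𝒫 is invariant under a linear map B with B² = −Id). Then for every odd integer k ≥ 1 there exists λ > 0 such that every solution u of the cycloid equation (∗) with parameter λ satisfies u(θ + π) = −u(θ) for all θ (so all solutions are 2π-periodic and λ is a double eigenvalue), and every solution that is not identically zero has exactly 2k distinct zeros in [0, 2π). -/

import Mathlib

open Real MeasureTheory

noncomputable section

/-- Determinant of two plane vectors: `[a, b] = a₁b₂ − a₂b₁`. -/
def det2 (a b : ℝ × ℝ) : ℝ := a.1 * b.2 - a.2 * b.1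

/-- The dual parameterization `q(θ) = p′(θ)/[p(θ), p′(θ)]`. -/
def dualQ (p : ℝ → ℝ × ℝ) : ℝ → ℝ × ℝ :=
  fun θ => (det2 (p θ) (deriv p θ))⁻¹ • deriv p θ

/-- `p` is a smooth, symmetric, quadratically convex parameterization of the
unit circle of a normed plane, by the angle its tangent makes with a fixed direction. -/
def IsUnitCircle (p : ℝ → ℝ × ℝ) : Prop :=
  ContDiff ℝ (⊤ : ℕ∞) p ∧ (∀ θ, p (θ + π) = -p θ) ∧
  (∀ θ, 0 < det2 (p θ) (deriv p θ)) ∧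
  (∀ θ, 0 < det2 (deriv p θ) (deriv (deriv p) θ))

/-- `u` is a solution of the cycloid equation
`(1/[p,p'])·(u'/[q,q'])' = −λ·u` for the normed plane with unit circle `p`. -/
def IsCycloidSol (p : ℝ → ℝ × ℝ) (lam : ℝ) (u : ℝ → ℝ) : Prop :=
  ContDiff ℝ 2 u ∧
  ∀ θ, (det2 (p θ) (deriv p θ))⁻¹ *
      deriv (fun t => deriv u t / det2 (dualQ p t) (deriv (dualQ p) t)) θ = -lam * u θ

/-!
Write `λ = μ²`, `a = [p, p']` and `b = [q, q']`. The cycloid equation is the system `u' = μ b v`,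
`v' = -μ a u`, and the angle `φ` of a nonzero solution `r (sin φ, cos φ)` obeys the Prüfer equation
`φ' = μ (b cos² φ + a sin² φ)`; the zeros of `u` are the times at which `φ` crosses `π ℤ`. The
invariance of the unit circle gives `a` and `b` the period `T = π / 2`. By the intermediate value
theorem in `μ`, some angle satisfies `φ (t + 2 T) = φ t + k π`. As `k` is odd, a solution with this
angle is never parallel to its translate by `T`: otherwise `φ` would advance by the same multiple of
`π` over each period `T`, and `k` would be even. Hence the solution and its translate form a basis,
and the constancy of their Wronskian forces `r (t + 2 T) = r t`, so that every solution changes sign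
under `t ↦ t + 2 T`. Every angle thus advances by a multiple of `π` over `2 T`, and this multiple is
`k` because angles trapped between two translates `φ + n π`, `φ + (n + 1) π` stay so.
-/

open Set Filter Topology Function
open scoped NNReal BoundedContinuousFunction

section IntegralCurve

variable {E : Type*} [NormedAddCommGroup E] [NormedSpace ℝ E] {v : ℝ → E → E} {K L : ℝ≥0}

lemma isIntegralCurve_unique (hv : ∀ t, LipschitzWith K (v t)) {γ γ' : ℝ → E}
    (hγ : IsIntegralCurve γ v) (hγ' : IsIntegralCurve γ' v) {s : ℝ} (h : γ s = γ' s) : γ = γ' :=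
  ODE_solution_unique_univ (s := fun _ => univ) (fun t => (hv t).lipschitzOnWith)
    (fun t => ⟨hγ t, trivial⟩) (fun t => ⟨hγ' t, trivial⟩) h

lemma isIntegralCurve_comp_add_of_periodic {T : ℝ} (hv : Periodic v T) {γ : ℝ → E}
    (hγ : IsIntegralCurve γ v) : IsIntegralCurve (fun t => γ (t + T)) v := by
  have hshift : v ∘ (· + T) = v := funext hv
  exact hshift ▸ hγ.comp_add T

lemma exists_forall_mem_Ioo_hasDerivAt [CompleteSpace E] (hv : ∀ t, LipschitzWith K (v t))
    (hcont : ∀ x, Continuous (v · x)) (hbound : ∀ t x, ‖v t x‖ ≤ L) (s : ℝ) (x : E)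
    {R : ℝ} (hR : 0 ≤ R) :
    ∃ γ : ℝ → E, γ s = x ∧ ∀ t ∈ Ioo (s - R) (s + R), HasDerivAt γ (v t (γ t)) t := by
  have hs : s ∈ Icc (s - R) (s + R) := ⟨by linarith, by linarith⟩
  have hPL : IsPicardLindelof v ⟨s, hs⟩ x (L * R.toNNReal) 0 L K :=
    { lipschitzOnWith := fun t _ => (hv t).lipschitzOnWith
      continuousOn := fun x _ => (hcont x).continuousOn
      norm_le := fun t _ x _ => hbound t x
      mul_max_le := by simp [hR] }
  obtain ⟨γ, hγs, hγ⟩ := hPL.exists_eq_forall_mem_Icc_hasDerivWithinAt₀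
  exact ⟨γ, hγs, fun t ht =>
    (hγ t (Ioo_subset_Icc_self ht)).hasDerivAt (Icc_mem_nhds ht.1 ht.2)⟩

lemma exists_isIntegralCurve_of_bounded [CompleteSpace E] (hv : ∀ t, LipschitzWith K (v t))
    (hcont : ∀ x, Continuous (v · x)) (hbound : ∀ t x, ‖v t x‖ ≤ L) (s : ℝ) (x : E) :
    ∃ γ : ℝ → E, γ s = x ∧ IsIntegralCurve γ v := by
  have hlocal (t : ℝ) : ∃ γ : ℝ → E, γ s = x ∧
      ∀ τ ∈ Ioo (s - (|t - s| + 1)) (s + (|t - s| + 1)), HasDerivAt γ (v τ (γ τ)) τ :=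
    exists_forall_mem_Ioo_hasDerivAt hv hcont hbound s x (by positivity)
  choose γ hγs hγ using hlocal
  have hagree {t t' : ℝ} (h : |t' - s| < |t - s| + 1) : γ t' t' = γ t t' := by
    let ρ := min (|t - s| + 1) (|t' - s| + 1)
    have hρ : |t' - s| < ρ := lt_min h (by linarith)
    have hρt : ρ ≤ |t - s| + 1 := min_le_left _ _
    have hρt' : ρ ≤ |t' - s| + 1 := min_le_right _ _
    have hρ0 : 0 < ρ := (abs_nonneg _).trans_lt hρ
    refine ODE_solution_unique_of_mem_Ioo (a := s - ρ) (b := s + ρ) (t₀ := s)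
      (s := fun _ => univ) (fun t _ => (hv t).lipschitzOnWith)
      ⟨by linarith, by linarith⟩
      (fun τ hτ => ⟨hγ t' τ ⟨by linarith [hτ.1], by linarith [hτ.2]⟩, trivial⟩)
      (fun τ hτ => ⟨hγ t τ ⟨by linarith [hτ.1], by linarith [hτ.2]⟩, trivial⟩)
      (by rw [hγs, hγs]) ?_
    constructor <;> linarith [abs_lt.mp hρ]
  refine ⟨fun t => γ t t, hγs s, fun t => ?_⟩
  have hnear : (fun t' => γ t' t') =ᶠ[𝓝 t] γ t := by
    have : ∀ᶠ t' in 𝓝 t, |t' - s| < |t - s| + 1 :=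
      ContinuousAt.eventually_lt (by fun_prop) continuousAt_const (by linarith)
    filter_upwards [this] with t' using hagree
  refine (hγ t t ?_).congr_of_eventuallyEq hnear
  constructor <;> linarith [le_abs_self (t - s), neg_abs_le (t - s)]

lemma isIntegralCurve_lt_of_lt {v : ℝ → ℝ → ℝ} (hv : ∀ t, LipschitzWith K (v t)) {γ γ' : ℝ → ℝ}
    (hγ : IsIntegralCurve γ v) (hγ' : IsIntegralCurve γ' v) {s : ℝ} (h : γ s < γ' s) (t : ℝ) :
    γ t < γ' t := by
  by_contra! hle
  obtain ⟨r, hr⟩ := intermediate_value_univ₂ hγ.continuous hγ'.continuous h.le hle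
  exact h.ne (congrFun (isIntegralCurve_unique hv hγ hγ' hr) s)

lemma isIntegralCurve_le_of_le {v : ℝ → ℝ → ℝ} (hv : ∀ t, LipschitzWith K (v t)) {γ γ' : ℝ → ℝ}
    (hγ : IsIntegralCurve γ v) (hγ' : IsIntegralCurve γ' v) {s : ℝ} (h : γ s ≤ γ' s) (t : ℝ) :
    γ t ≤ γ' t :=
  not_lt.mp fun hlt => h.not_gt (isIntegralCurve_lt_of_lt hv hγ' hγ hlt s)

end IntegralCurve

/-- The vector field of the Prüfer equation `φ' = b cos² φ + a sin² φ`, satisfied by the angle of a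
nonzero solution `r (sin φ, cos φ)` of the system `u' = b v`, `v' = -a u`. -/
def pruferField (a b : ℝ → ℝ) (t x : ℝ) : ℝ := b t * cos x ^ 2 + a t * sin x ^ 2

/-- The vector field of the linear Hamiltonian system `u' = b v`, `v' = -a u`. -/
def hamiltonianField (a b : ℝ → ℝ) (t : ℝ) (z : ℝ × ℝ) : ℝ × ℝ := (b t * z.2, -(a t * z.1))

/-- The point with Prüfer coordinates `(r, θ)`; the angle is measured from the second axis. -/
def polar (r θ : ℝ) : ℝ × ℝ := (r * sin θ, r * cos θ)

section PruferField

lemma periodic_pruferField {a b : ℝ → ℝ} {T : ℝ} (ha : Periodic a T) (hb : Periodic b T) :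
    Periodic (pruferField a b) T := fun t => by
  funext x
  simp only [pruferField, ha t, hb t]

lemma le_pruferField {a b : ℝ → ℝ} {m t : ℝ} (ha : m ≤ a t) (hb : m ≤ b t) (x : ℝ) :
    m ≤ pruferField a b t x :=
  calc m = m * cos x ^ 2 + m * sin x ^ 2 := by rw [← mul_add, cos_sq_add_sin_sq, mul_one]
    _ ≤ pruferField a b t x := by unfold pruferField; gcongr

lemma pruferField_pos {a b : ℝ → ℝ} {t : ℝ} (ha : 0 < a t) (hb : 0 < b t) (x : ℝ) :
    0 < pruferField a b t x :=
  (lt_min ha hb).trans_le (le_pruferField (min_le_left _ _) (min_le_right _ _) x)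

lemma strictMono_of_isIntegralCurve_pruferField {a b φ : ℝ → ℝ} (ha : ∀ t, 0 < a t)
    (hb : ∀ t, 0 < b t) (hφ : IsIntegralCurve φ (pruferField a b)) : StrictMono φ :=
  strictMono_of_hasDerivAt_pos hφ fun t => pruferField_pos (ha t) (hb t) (φ t)

lemma pruferField_add_int_mul_pi (a b : ℝ → ℝ) (t x : ℝ) (n : ℤ) :
    pruferField a b t (x + n * π) = pruferField a b t x := by
  have hsign : ((-1 : ℝ) ^ n) ^ 2 = 1 := by
    rw [← zpow_natCast, zpow_comm, zpow_natCast, neg_one_sq, one_zpow]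
  simp only [pruferField, sin_add_int_mul_pi, cos_add_int_mul_pi, mul_pow, hsign, one_mul]

lemma isIntegralCurve_pruferField_add_int_mul_pi {a b φ : ℝ → ℝ}
    (hφ : IsIntegralCurve φ (pruferField a b)) (n : ℤ) :
    IsIntegralCurve (fun t => φ t + n * π) (pruferField a b) := fun t => by
  simpa only [pruferField_add_int_mul_pi] using (hφ t).add_const (n * π)

variable (a b : ℝ →ᵇ ℝ)

lemma abs_pruferField_le (t x : ℝ) : |pruferField a b t x| ≤ ‖a‖ + ‖b‖ :=
  calc |pruferField a b t x| ≤ |b t| * cos x ^ 2 + |a t| * sin x ^ 2 := by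
        refine (abs_add_le _ _).trans_eq ?_
        rw [abs_mul, abs_mul, abs_sq, abs_sq]
    _ ≤ ‖b‖ * 1 + ‖a‖ * 1 := by
        gcongr
        exacts [b.norm_coe_le_norm t, cos_sq_le_one x, a.norm_coe_le_norm t, sin_sq_le_one x]
    _ = ‖a‖ + ‖b‖ := by ring

lemma lipschitzWith_pruferField (t : ℝ) : LipschitzWith (‖a‖₊ + ‖b‖₊) (pruferField a b t) := by
  refine LipschitzWith.of_dist_le_mul fun x y => ?_
  have hfactor : pruferField a b t x - pruferField a b t y
      = (a t - b t) * sin (x + y) * sin (x - y) := by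
    rw [sin_add, sin_sub, pruferField, pruferField]
    linear_combination (b t + (a t - b t) * sin y ^ 2) * sin_sq_add_cos_sq x
      - (b t + (a t - b t) * sin x ^ 2) * sin_sq_add_cos_sq y
  have hcoeff : |a t - b t| ≤ ‖a‖ + ‖b‖ :=
    (abs_sub _ _).trans (add_le_add (a.norm_coe_le_norm t) (b.norm_coe_le_norm t))
  calc |pruferField a b t x - pruferField a b t y|
      = |a t - b t| * |sin (x + y)| * |sin (x - y)| := by rw [hfactor, abs_mul, abs_mul]
    _ ≤ (‖a‖ + ‖b‖) * 1 * |x - y| := by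
        gcongr ?_ * ?_ * ?_
        exacts [abs_sin_le_one _, abs_sin_le_abs]
    _ = (‖a‖ + ‖b‖) * |x - y| := by rw [mul_one]

lemma exists_isIntegralCurve_pruferField (s θ : ℝ) :
    ∃ φ : ℝ → ℝ, φ s = θ ∧ IsIntegralCurve φ (pruferField a b) :=
  exists_isIntegralCurve_of_bounded (lipschitzWith_pruferField a b)
    (fun x => by unfold pruferField; fun_prop) (L := ‖a‖₊ + ‖b‖₊) (abs_pruferField_le a b) s θ

variable {a b}

lemma floor_pruferAngle_sub_div_pi_eq {φ ψ : ℝ → ℝ} (hφ : IsIntegralCurve φ (pruferField a b))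
    (hψ : IsIntegralCurve ψ (pruferField a b)) (s t : ℝ) :
    ⌊(ψ t - φ t) / π⌋ = ⌊(ψ s - φ s) / π⌋ := by
  have hLip := lipschitzWith_pruferField a b
  set n := ⌊(ψ s - φ s) / π⌋ with hn
  obtain ⟨hlow, hupp⟩ := Int.floor_eq_iff.mp hn.symm
  rw [le_div_iff₀ pi_pos] at hlow
  rw [div_lt_iff₀ pi_pos] at hupp
  have hlow_t : φ t + n * π ≤ ψ t := isIntegralCurve_le_of_le hLip
    (isIntegralCurve_pruferField_add_int_mul_pi hφ n) hψ (s := s) (by linarith) t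
  have hupp_t : ψ t < φ t + (n + 1 : ℤ) * π := isIntegralCurve_lt_of_lt hLip hψ
    (isIntegralCurve_pruferField_add_int_mul_pi hφ (n + 1)) (s := s) (by push_cast; linarith) t
  push_cast at hupp_t
  rw [Int.floor_eq_iff, le_div_iff₀ pi_pos, div_lt_iff₀ pi_pos]
  constructor <;> linarith

lemma pruferAngle_add_period {T : ℝ} (ha : Periodic a T) (hb : Periodic b T) {φ : ℝ → ℝ}
    (hφ : IsIntegralCurve φ (pruferField a b)) {s : ℝ} {n : ℤ} (h : φ (s + T) = φ s + n * π)
    (t : ℝ) : φ (t + T) = φ t + n * π :=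
  congrFun (isIntegralCurve_unique (lipschitzWith_pruferField a b)
    (isIntegralCurve_comp_add_of_periodic (periodic_pruferField ha hb) hφ)
    (isIntegralCurve_pruferField_add_int_mul_pi hφ n) h) t

lemma dist_pruferAngle_le {a' b' : ℝ →ᵇ ℝ} {φ φ' : ℝ → ℝ}
    (hφ : IsIntegralCurve φ (pruferField a b)) (hφ' : IsIntegralCurve φ' (pruferField a' b'))
    {s t : ℝ} (hst : s ≤ t) (h : φ' s = φ s) :
    dist (φ' t) (φ t) ≤ gronwallBound 0 (‖a‖ + ‖b‖) (‖a' - a‖ + ‖b' - b‖) (t - s) := by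
  have hfield (τ : ℝ) :
      dist (pruferField a' b' τ (φ' τ)) (pruferField a b τ (φ' τ)) ≤ ‖a' - a‖ + ‖b' - b‖ := by
    have hlin : pruferField a' b' τ (φ' τ) - pruferField a b τ (φ' τ)
        = pruferField (a' - a : ℝ →ᵇ ℝ) (b' - b : ℝ →ᵇ ℝ) τ (φ' τ) := by
      simp only [pruferField, BoundedContinuousFunction.coe_sub, Pi.sub_apply]; ring
    rw [Real.dist_eq, hlin]
    exact abs_pruferField_le _ _ _ _
  simpa using dist_le_of_approx_trajectories_ODE (εg := 0) (lipschitzWith_pruferField a b)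
    hφ'.continuous.continuousOn (fun τ _ => (hφ' τ).hasDerivWithinAt) (fun τ _ => hfield τ)
    hφ.continuous.continuousOn (fun τ _ => (hφ τ).hasDerivWithinAt) (fun τ _ => (dist_self _).le)
    (dist_eq_zero.mpr h).le t ⟨hst, le_rfl⟩

lemma continuous_pruferAngle {X : Type*} [TopologicalSpace X] {a b : X → ℝ →ᵇ ℝ}
    (ha : Continuous a) (hb : Continuous b) {Φ : X → ℝ → ℝ}
    (hΦ : ∀ x, IsIntegralCurve (Φ x) (pruferField (a x) (b x))) {s t θ : ℝ} (hst : s ≤ t)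
    (hs : ∀ x, Φ x s = θ) : Continuous fun x => Φ x t := by
  refine continuous_iff_continuousAt.mpr fun x => tendsto_iff_dist_tendsto_zero.mpr ?_
  refine squeeze_zero (fun _ => dist_nonneg)
    (fun y => dist_pruferAngle_le (hΦ x) (hΦ y) hst ((hs y).trans (hs x).symm)) ?_
  have hbound : Continuous fun y =>
      gronwallBound 0 (‖a x‖ + ‖b x‖) (‖a y - a x‖ + ‖b y - b x‖) (t - s) :=
    (gronwallBound_continuous_ε _ _ _).comp (by fun_prop)
  simpa [gronwallBound_ε0_δ0] using hbound.tendsto x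

lemma exists_smul_pruferAngle_eq (ha : ∀ t, 0 < a t) (hb : ∀ t, 0 < b t) {s t : ℝ} (hst : s < t)
    {θ : ℝ} (hθ : 0 < θ) :
    ∃ μ : ℝ, 0 < μ ∧ ∃ φ : ℝ → ℝ,
      IsIntegralCurve φ (pruferField ⇑(μ • a) ⇑(μ • b)) ∧ φ s = 0 ∧ φ t = θ := by
  choose Φ hΦs hΦ using fun μ : ℝ => exists_isIntegralCurve_pruferField (μ • a) (μ • b) s 0
  have hcont : Continuous fun μ => Φ μ t :=
    continuous_pruferAngle (by fun_prop) (by fun_prop) hΦ hst.le hΦs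
  have hzero : Φ 0 t = 0 := by
    have hconst : IsIntegralCurve (fun _ => 0) (pruferField ⇑((0 : ℝ) • a) ⇑((0 : ℝ) • b)) :=
      isIntegralCurve_const fun τ => by simp [pruferField]
    exact congrFun (isIntegralCurve_unique (lipschitzWith_pruferField _ _) (hΦ 0) hconst (hΦs 0)) t
  obtain ⟨m, hm, hle⟩ : ∃ m > 0, ∀ τ ∈ Icc s t, m ≤ min (a τ) (b τ) :=
    isCompact_Icc.exists_forall_le' (by fun_prop) fun τ _ => lt_min (ha τ) (hb τ)
  have hlower {μ : ℝ} (hμ : 0 ≤ μ) : μ * m * (t - s) ≤ Φ μ t := by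
    have hslope : ∀ τ ∈ interior (Icc s t), μ * m ≤ deriv (Φ μ) τ := fun τ hτ => by
      have hmin := le_min_iff.mp (hle τ (interior_subset hτ))
      rw [(hΦ μ τ).deriv]
      exact le_pruferField (a := ⇑(μ • a)) (b := ⇑(μ • b))
        (mul_le_mul_of_nonneg_left hmin.1 hμ) (mul_le_mul_of_nonneg_left hmin.2 hμ) _
    simpa [hΦs] using (convex_Icc s t).mul_sub_le_image_sub_of_le_deriv
      (hΦ μ).continuous.continuousOn (fun τ _ => (hΦ μ τ).differentiableAt.differentiableWithinAt)
      hslope s (left_mem_Icc.mpr hst.le) t (right_mem_Icc.mpr hst.le) hst.le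
  have hst' : 0 < t - s := sub_pos.mpr hst
  have hM : 0 ≤ θ / (m * (t - s)) := by positivity
  have hupper : θ ≤ Φ (θ / (m * (t - s))) t := (hlower hM).trans' (by field_simp; rfl)
  obtain ⟨μ, hμ, hμθ⟩ := intermediate_value_Icc hM hcont.continuousOn ⟨hzero.trans_le hθ.le, hupper⟩
  refine ⟨μ, hμ.1.lt_of_ne ?_, Φ μ, hΦ μ, hΦs μ, hμθ⟩
  rintro rfl
  exact hθ.ne (hzero.symm.trans hμθ)

end PruferField

section Hamiltonian

lemma det2_polar (r θ ρ ψ : ℝ) : det2 (polar r θ) (polar ρ ψ) = r * ρ * sin (θ - ψ) := by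
  simp only [det2, polar, sin_sub]; ring

lemma polar_add_int_mul_pi_of_odd {k : ℤ} (hk : Odd k) (r θ : ℝ) :
    polar r (θ + k * π) = -polar r θ := by
  simp [polar, sin_add_int_mul_pi, cos_add_int_mul_pi, hk.neg_one_zpow]

lemma exists_polar_eq {x : ℝ × ℝ} (hx : x ≠ 0) : ∃ r θ : ℝ, 0 < r ∧ polar r θ = x := by
  let z : ℂ := ⟨x.2, x.1⟩
  have hz : z ≠ 0 := fun h =>
    hx (Prod.ext (congrArg Complex.im h) (congrArg Complex.re h))
  exact ⟨‖z‖, z.arg, norm_pos_iff.mpr hz,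
    Prod.ext (Complex.norm_mul_sin_arg z) (Complex.norm_mul_cos_arg z)⟩

lemma eq_zero_of_det2_eq_zero {w x y : ℝ × ℝ} (hxy : det2 x y ≠ 0) (hx : det2 w x = 0)
    (hy : det2 w y = 0) : w = 0 := by
  have h₁ : w.1 * det2 x y = x.1 * det2 w y - y.1 * det2 w x := by simp only [det2]; ring
  have h₂ : w.2 * det2 x y = x.2 * det2 w y - y.2 * det2 w x := by simp only [det2]; ring
  rw [hx, hy, mul_zero, mul_zero, sub_zero] at h₁ h₂
  exact Prod.ext ((mul_eq_zero.mp h₁).resolve_right hxy) ((mul_eq_zero.mp h₂).resolve_right hxy)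

lemma periodic_hamiltonianField {a b : ℝ → ℝ} {T : ℝ} (ha : Periodic a T) (hb : Periodic b T) :
    Periodic (hamiltonianField a b) T := fun t => by
  funext z
  simp only [hamiltonianField, ha t, hb t]

lemma lipschitzWith_hamiltonianField (a b : ℝ →ᵇ ℝ) (t : ℝ) :
    LipschitzWith (max ‖b‖₊ ‖a‖₊) (hamiltonianField a b t) := by
  have hmul (f : ℝ →ᵇ ℝ) : LipschitzWith ‖f‖₊ (f t * ·) :=
    (lipschitzWith_smul (f t)).weaken (f.nnnorm_coe_le_nnnorm t)
  simpa only [mul_one] using! ((hmul b).comp LipschitzWith.prod_snd).prodMk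
    ((hmul a).comp LipschitzWith.prod_fst).neg

lemma hasDerivAt_det2 {f g : ℝ → ℝ × ℝ} {f' g' : ℝ × ℝ} {t : ℝ} (hf : HasDerivAt f f' t)
    (hg : HasDerivAt g g' t) :
    HasDerivAt (fun t => det2 (f t) (g t)) (det2 f' (g t) + det2 (f t) g') t := by
  have hf₁ : HasDerivAt (fun t => (f t).1) f'.1 t := by simpa using hf.hasFDerivAt.fst.hasDerivAt
  have hf₂ : HasDerivAt (fun t => (f t).2) f'.2 t := by simpa using hf.hasFDerivAt.snd.hasDerivAt
  have hg₁ : HasDerivAt (fun t => (g t).1) g'.1 t := by simpa using hg.hasFDerivAt.fst.hasDerivAt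
  have hg₂ : HasDerivAt (fun t => (g t).2) g'.2 t := by simpa using hg.hasFDerivAt.snd.hasDerivAt
  exact ((hf₁.mul hg₂).sub (hf₂.mul hg₁)).congr_deriv (by simp only [det2]; ring)

lemma det2_eq_of_isIntegralCurve_hamiltonianField {a b : ℝ → ℝ} {z w : ℝ → ℝ × ℝ}
    (hz : IsIntegralCurve z (hamiltonianField a b)) (hw : IsIntegralCurve w (hamiltonianField a b))
    (s t : ℝ) : det2 (z s) (w s) = det2 (z t) (w t) := by
  have hderiv (τ : ℝ) : HasDerivAt (fun τ => det2 (z τ) (w τ)) 0 τ :=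
    (hasDerivAt_det2 (hz τ) (hw τ)).congr_deriv (by simp only [det2, hamiltonianField]; ring)
  exact is_const_of_deriv_eq_zero (fun τ => (hderiv τ).differentiableAt)
    (fun τ => (hderiv τ).deriv) s t

lemma exists_isIntegralCurve_polar {a b φ : ℝ → ℝ} (ha : Continuous a) (hb : Continuous b)
    (hφ : IsIntegralCurve φ (pruferField a b)) (s : ℝ) {ρ : ℝ} (hρ : 0 < ρ) :
    ∃ r : ℝ → ℝ, r s = ρ ∧ (∀ t, 0 < r t) ∧
      IsIntegralCurve (fun t => polar (r t) (φ t)) (hamiltonianField a b) := by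
  let g (t : ℝ) : ℝ := (b t - a t) * (sin (φ t) * cos (φ t))
  have hg : Continuous g := by
    have := hφ.continuous
    fun_prop
  let r (t : ℝ) : ℝ := ρ * exp (∫ τ in s..t, g τ)
  have hr (t : ℝ) : HasDerivAt r (r t * g t) t :=
    ((hg.integral_hasStrictDerivAt s t).hasDerivAt.exp.const_mul ρ).congr_deriv
      (mul_assoc _ _ _).symm
  refine ⟨r, by simp [r], fun t => by positivity, fun t => ?_⟩
  refine (((hr t).mul (hφ t).sin).prodMk ((hr t).mul (hφ t).cos)).congr_deriv (Prod.ext ?_ ?_)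
  · simp only [g, pruferField, hamiltonianField, polar]
    linear_combination (r t * b t * cos (φ t)) * sin_sq_add_cos_sq (φ t)
  · simp only [g, pruferField, hamiltonianField, polar]
    linear_combination (-(r t * a t * sin (φ t))) * sin_sq_add_cos_sq (φ t)

variable {a b : ℝ →ᵇ ℝ}

lemma exists_eq_polar_of_isIntegralCurve_hamiltonianField {z : ℝ → ℝ × ℝ}
    (hz : IsIntegralCurve z (hamiltonianField a b)) (hne : z ≠ 0) :
    ∃ r φ : ℝ → ℝ, (∀ t, 0 < r t) ∧ IsIntegralCurve φ (pruferField a b) ∧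
      z = fun t => polar (r t) (φ t) := by
  obtain ⟨s, hs⟩ := Function.ne_iff.mp hne
  obtain ⟨ρ, θ, hρ, hρθ⟩ := exists_polar_eq hs
  obtain ⟨φ, hφs, hφ⟩ := exists_isIntegralCurve_pruferField a b s θ
  obtain ⟨r, hrs, hr, hrφ⟩ := exists_isIntegralCurve_polar a.continuous b.continuous hφ s hρ
  exact ⟨r, φ, hr, hφ, isIntegralCurve_unique (lipschitzWith_hamiltonianField a b) hz hrφ
    (by rw [hrs, hφs, hρθ])⟩

variable {T : ℝ} (ha : Periodic a T) (hb : Periodic b T) {φ : ℝ → ℝ}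
  (hφ : IsIntegralCurve φ (pruferField a b)) {k : ℤ} (hk : Odd k)
  (hφT : ∀ t, φ (t + 2 * T) = φ t + k * π)

include ha hb hφ hk hφT

lemma sin_pruferAngle_sub_add_ne_zero (t : ℝ) : sin (φ t - φ (t + T)) ≠ 0 := by
  intro hsin
  obtain ⟨n, hn⟩ := sin_eq_zero_iff.mp hsin
  have hstep : φ (t + T) = φ t + (-n : ℤ) * π := by push_cast; linarith
  have hstep' : φ (t + T + T) = φ (t + T) + (-n : ℤ) * π := pruferAngle_add_period ha hb hφ hstep _
  have hkn : (k : ℝ) = (-n : ℤ) + (-n : ℤ) := by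
    apply mul_right_cancel₀ pi_ne_zero
    rw [add_assoc, ← two_mul, hφT] at hstep'
    linarith
  exact Int.not_even_iff_odd.mpr hk ⟨-n, mod_cast hkn⟩

lemma antiperiodic_polar {r : ℝ → ℝ} (hr : ∀ t, 0 < r t)
    (hrφ : IsIntegralCurve (fun t => polar (r t) (φ t)) (hamiltonianField a b)) :
    Antiperiodic (fun t => polar (r t) (φ t)) (2 * T) := by
  have hshift := isIntegralCurve_comp_add_of_periodic (periodic_hamiltonianField ha hb) hrφ
  have hr2T (t : ℝ) : r (t + 2 * T) = r t := by
    have hwronskian := det2_eq_of_isIntegralCurve_hamiltonianField hrφ hshift t (t + T)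
    have hsin : sin (φ (t + T) - φ (t + 2 * T)) = sin (φ t - φ (t + T)) := by
      rw [hφT, ← sub_sub, sin_sub_int_mul_pi, hk.neg_one_zpow, neg_one_mul, ← sin_neg, neg_sub]
    rw [det2_polar, det2_polar, add_assoc, ← two_mul, hsin, mul_comm (r t)] at hwronskian
    exact (mul_left_cancel₀ (hr _).ne' (mul_right_cancel₀
      (sin_pruferAngle_sub_add_ne_zero ha hb hφ hk hφT t) hwronskian)).symm
  intro t
  simp only [hr2T, hφT, polar_add_int_mul_pi_of_odd hk]

lemma antiperiodic_of_isIntegralCurve_hamiltonianField {z : ℝ → ℝ × ℝ}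
    (hz : IsIntegralCurve z (hamiltonianField a b)) : Antiperiodic z (2 * T) := by
  obtain ⟨r, -, hr, hrφ⟩ := exists_isIntegralCurve_polar a.continuous b.continuous hφ 0 one_pos
  set e := fun t => polar (r t) (φ t) with he
  have hanti : Antiperiodic e (2 * T) := antiperiodic_polar ha hb hφ hk hφT hr hrφ
  have hanti_shift : Antiperiodic (fun t => e (t + T)) (2 * T) := fun t => by
    simpa only [add_right_comm] using hanti (t + T)
  have hshift := isIntegralCurve_comp_add_of_periodic (periodic_hamiltonianField ha hb) hrφ
  have horth {w : ℝ → ℝ × ℝ} (hw : IsIntegralCurve w (hamiltonianField a b))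
      (hanti : Antiperiodic w (2 * T)) (t : ℝ) : det2 (z (t + 2 * T) + z t) (w t) = 0 := by
    have hwronskian := det2_eq_of_isIntegralCurve_hamiltonianField hz hw t (t + 2 * T)
    rw [hanti t] at hwronskian
    simp only [det2, Prod.fst_neg, Prod.snd_neg, Prod.fst_add, Prod.snd_add] at hwronskian ⊢
    linear_combination hwronskian
  have hbasis (t : ℝ) : det2 (e t) (e (t + T)) ≠ 0 := by
    rw [he, det2_polar]
    exact mul_ne_zero (mul_pos (hr _) (hr _)).ne'
      (sin_pruferAngle_sub_add_ne_zero ha hb hφ hk hφT t)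
  exact fun t => eq_neg_of_add_eq_zero_left <|
    eq_zero_of_det2_eq_zero (hbasis t) (horth hrφ hanti t) (horth hshift hanti_shift t)

lemma pruferAngle_add_two_mul {ψ : ℝ → ℝ} (hψ : IsIntegralCurve ψ (pruferField a b)) (t : ℝ) :
    ψ (t + 2 * T) = ψ t + k * π := by
  obtain ⟨r, -, hr, hrψ⟩ := exists_isIntegralCurve_polar a.continuous b.continuous hψ 0 one_pos
  have hsin : sin (ψ (t + 2 * T) - ψ t) = 0 := by
    have hanti : polar (r (t + 2 * T)) (ψ (t + 2 * T)) = -polar (r t) (ψ t) :=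
      antiperiodic_of_isIntegralCurve_hamiltonianField ha hb hφ hk hφT hrψ t
    have hdet : det2 (polar (r (t + 2 * T)) (ψ (t + 2 * T))) (polar (r t) (ψ t)) = 0 := by
      rw [hanti]
      simp only [det2, Prod.fst_neg, Prod.snd_neg]
      ring
    rw [det2_polar] at hdet
    exact (mul_eq_zero.mp hdet).resolve_left (mul_pos (hr _) (hr _)).ne'
  obtain ⟨j, hj⟩ := sin_eq_zero_iff.mp hsin
  have hfloor := floor_pruferAngle_sub_div_pi_eq hφ hψ t (t + 2 * T)
  have hquot : (ψ (t + 2 * T) - φ (t + 2 * T)) / π = (ψ t - φ t) / π + (j - k : ℤ) := by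
    rw [hφT, eq_add_of_sub_eq' hj.symm]
    push_cast
    field_simp
    ring
  rw [hquot, Int.floor_add_intCast] at hfloor
  obtain rfl : j = k := by linarith
  linarith

end Hamiltonian

section ZeroCount

lemma ncard_sin_eq_zero_Ico (c : ℝ) (n : ℕ) : {x ∈ Ico c (c + n * π) | sin x = 0}.ncard = n := by
  have hpreimage : (fun m : ℤ => m * π) ⁻¹' Ico c (c + n * π)
      = Finset.Ico ⌈c / π⌉ (⌈c / π⌉ + n) := by
    ext m
    rw [Finset.coe_Ico, ← Int.ceil_add_natCast, ← Int.preimage_Ico, div_add' _ _ _ pi_ne_zero]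
    simp only [mem_preimage, mem_Ico, div_le_iff₀ pi_pos, lt_div_iff₀ pi_pos]
  have himage : {x ∈ Ico c (c + n * π) | sin x = 0}
      = (fun m : ℤ => m * π) '' Finset.Ico ⌈c / π⌉ (⌈c / π⌉ + n) := by
    rw [← hpreimage, image_preimage_eq_inter_range]
    exact congrArg (Ico c (c + n * π) ∩ ·) (Set.ext fun _ => sin_eq_zero_iff)
  rw [himage, ncard_image_of_injective, ncard_coe_finset, Int.card_Ico]
  · simp
  · intro m m' h
    simpa [pi_ne_zero] using h

lemma ncard_sin_comp_eq_zero_Ico {φ : ℝ → ℝ} (hφ : Continuous φ) (hmono : StrictMono φ) {s t : ℝ}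
    {n : ℕ} (h : φ t = φ s + n * π) :
    {τ ∈ Ico s t | sin (φ τ) = 0}.ncard = n := by
  have himage : φ '' {τ ∈ Ico s t | sin (φ τ) = 0} = {x ∈ Ico (φ s) (φ t) | sin x = 0} := by
    rw [← hφ.image_Ico_of_strictMono hmono]
    exact image_inter_preimage φ (Ico s t) {x | sin x = 0}
  rw [← ncard_image_of_injective _ hmono.injective, himage, h, ncard_sin_eq_zero_Ico]

end ZeroCount

lemma exists_smul_antiperiodic_ncard_zeros_eq {a b : ℝ →ᵇ ℝ} (ha : ∀ t, 0 < a t) (hb : ∀ t, 0 < b t)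
    {T : ℝ} (hT : 0 < T) (haT : Periodic a T) (hbT : Periodic b T) {k : ℕ} (hk : Odd k) :
    ∃ μ : ℝ, 0 < μ ∧ ∀ z, IsIntegralCurve z (hamiltonianField ⇑(μ • a) ⇑(μ • b)) →
      Antiperiodic z (2 * T) ∧
        (z ≠ 0 → {t ∈ Ico 0 (4 * T) | (z t).1 = 0}.ncard = 2 * k) := by
  obtain ⟨μ, hμ, φ, hφ, hφ0, hφ2T⟩ := exists_smul_pruferAngle_eq ha hb (s := 0) (t := 2 * T)
    (by positivity) (mul_pos (Nat.cast_pos.mpr hk.pos) pi_pos)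
  have haT' : Periodic ⇑(μ • a) T := haT.smul μ
  have hbT' : Periodic ⇑(μ • b) T := hbT.smul μ
  have hkℤ : Odd (k : ℤ) := hk.natCast
  have hφT (t : ℝ) : φ (t + 2 * T) = φ t + (k : ℤ) * π :=
    pruferAngle_add_period (by simpa using haT'.nat_mul 2) (by simpa using hbT'.nat_mul 2) hφ
      (s := 0) (by simp [hφ0, hφ2T]) t
  refine ⟨μ, hμ, fun z hz =>
    ⟨antiperiodic_of_isIntegralCurve_hamiltonianField haT' hbT' hφ hkℤ hφT hz, fun hne => ?_⟩⟩
  obtain ⟨r, ψ, hr, hψ, rfl⟩ := exists_eq_polar_of_isIntegralCurve_hamiltonianField hz hne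
  have hψmono : StrictMono ψ := strictMono_of_isIntegralCurve_pruferField
    (fun t => mul_pos hμ (ha t)) (fun t => mul_pos hμ (hb t)) hψ
  have hψ4T : ψ (4 * T) = ψ 0 + (2 * k : ℕ) * π := by
    have hψT := pruferAngle_add_two_mul haT' hbT' hφ hkℤ hφT hψ
    have h := hψT (0 + 2 * T)
    rw [hψT 0, show 0 + 2 * T + 2 * T = 4 * T by ring] at h
    rw [h]
    push_cast
    ring
  simpa only [polar, mul_eq_zero, (hr _).ne', false_or] using
    ncard_sin_comp_eq_zero_Ico hψ.continuous hψmono hψ4T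

section Cycloid

/-- The areal speed `[p, p']` of a plane curve `p`: twice the rate at which its radius vector sweeps
out signed area. -/
def arealSpeed (p : ℝ → ℝ × ℝ) (t : ℝ) : ℝ := det2 (p t) (deriv p t)

lemma arealSpeed_smul {f : ℝ → ℝ} {g : ℝ → ℝ × ℝ} {t : ℝ} (hf : DifferentiableAt ℝ f t)
    (hg : DifferentiableAt ℝ g t) :
    arealSpeed (fun t => f t • g t) t = f t ^ 2 * arealSpeed g t := by
  simp only [arealSpeed, deriv_fun_smul hf hg, det2, Prod.fst_add, Prod.snd_add, Prod.smul_fst,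
    Prod.smul_snd, smul_eq_mul]
  ring

lemma contDiff_arealSpeed {p : ℝ → ℝ × ℝ} {n : ℕ} (hp : ContDiff ℝ (n + 1) p) :
    ContDiff ℝ n (arealSpeed p) := by
  have hp₀ : ContDiff ℝ n p := hp.of_succ
  have hp₁ : ContDiff ℝ n (deriv p) := (contDiff_succ_iff_deriv.mp hp).2.2
  exact (hp₀.fst.mul hp₁.snd).sub (hp₀.snd.mul hp₁.fst)

lemma contDiff_dualQ {p : ℝ → ℝ × ℝ} {n : ℕ} (hp : ContDiff ℝ (n + 1) p)
    (hne : ∀ t, arealSpeed p t ≠ 0) : ContDiff ℝ n (dualQ p) :=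
  ((contDiff_arealSpeed hp).inv hne).smul (contDiff_succ_iff_deriv.mp hp).2.2

lemma arealSpeed_dualQ {p : ℝ → ℝ × ℝ} (hp : ContDiff ℝ 2 p) {t : ℝ} (hne : arealSpeed p t ≠ 0) :
    arealSpeed (dualQ p) t = (arealSpeed p t)⁻¹ ^ 2 * arealSpeed (deriv p) t := by
  have hp₂ : ContDiff ℝ ((1 : ℕ) + 1) p := by simpa [one_add_one_eq_two] using hp
  exact arealSpeed_smul (((contDiff_arealSpeed hp₂).differentiable one_ne_zero t).inv hne)
    ((contDiff_succ_iff_deriv.mp hp₂).2.2.differentiable one_ne_zero t)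

section Equivariant

variable {B : ℝ × ℝ →L[ℝ] ℝ × ℝ} {T : ℝ} {p : ℝ → ℝ × ℝ} (hp : Differentiable ℝ p)
  (hpB : ∀ t, p (t + T) = B (p t))

include hp hpB

lemma deriv_add_of_equivariant (t : ℝ) : deriv p (t + T) = B (deriv p t) := by
  rw [← deriv_comp_add_const, funext hpB]
  exact (B.hasFDerivAt.comp_hasDerivAt t (hp t).hasDerivAt).deriv

variable (hB : ∀ x y, det2 (B x) (B y) = det2 x y)

include hB

lemma periodic_arealSpeed_of_equivariant : Periodic (arealSpeed p) T := fun t => by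
  rw [arealSpeed, deriv_add_of_equivariant hp hpB, hpB, hB, arealSpeed]

lemma dualQ_add_of_equivariant (t : ℝ) : dualQ p (t + T) = B (dualQ p t) := by
  change (arealSpeed p (t + T))⁻¹ • deriv p (t + T) = B ((arealSpeed p t)⁻¹ • deriv p t)
  rw [periodic_arealSpeed_of_equivariant hp hpB hB, deriv_add_of_equivariant hp hpB, map_smul]

end Equivariant

lemma exists_coe_boundedContinuousFunction_eq {α : Type*} [PseudoMetricSpace α] {f : ℝ → α}
    (hf : Continuous f) {T : ℝ} (hT : T ≠ 0) (hper : Periodic f T) : ∃ F : ℝ →ᵇ α, ⇑F = f :=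
  ⟨⟨⟨f, hf⟩, Metric.isBounded_range_iff.mp (hper.isBounded_of_continuous hT hf)⟩, rfl⟩

lemma IsCycloidSol.isIntegralCurve_hamiltonianField {p : ℝ → ℝ × ℝ}
    (ha : ∀ t, arealSpeed p t ≠ 0) (hb : ∀ t, arealSpeed (dualQ p) t ≠ 0)
    (hdiff : Differentiable ℝ (arealSpeed (dualQ p))) {μ : ℝ} (hμ : μ ≠ 0) {u : ℝ → ℝ}
    (hu : IsCycloidSol p (μ ^ 2) u) :
    IsIntegralCurve (fun t => (u t, μ⁻¹ * (deriv u t / arealSpeed (dualQ p) t)))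
      (hamiltonianField (μ • arealSpeed p) (μ • arealSpeed (dualQ p))) := by
  obtain ⟨hu, heq⟩ := hu
  intro t
  have hbt := hb t
  have hderiv : deriv (fun t => deriv u t / arealSpeed (dualQ p) t) t
      = arealSpeed p t * (-μ ^ 2 * u t) := (inv_mul_eq_iff_eq_mul₀ (ha t)).mp (heq t)
  have hu' : Differentiable ℝ (deriv u) :=
    ((contDiff_succ_iff_deriv (n := 1)).mp (by simpa [one_add_one_eq_two] using hu)).2.2
      |>.differentiable one_ne_zero
  have hv : HasDerivAt (fun t => deriv u t / arealSpeed (dualQ p) t)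
      (arealSpeed p t * (-μ ^ 2 * u t)) t :=
    hderiv ▸ ((hu' t).div (hdiff t) hbt).hasDerivAt
  refine ((hu.differentiable two_ne_zero t).hasDerivAt.prodMk (hv.const_mul μ⁻¹)).congr_deriv ?_
  simp only [hamiltonianField, Pi.smul_apply, smul_eq_mul, Prod.mk.injEq]
  constructor <;> field_simp

end Cycloid

theorem stmt_17_general {p : ℝ → ℝ × ℝ} (hp : ContDiff ℝ 3 p)
    (hpos : ∀ θ, 0 < det2 (p θ) (deriv p θ))
    (hconv : ∀ θ, 0 < det2 (deriv p θ) (deriv (deriv p) θ))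
    {B : ℝ × ℝ →L[ℝ] ℝ × ℝ} (hB : ∀ x y, det2 (B x) (B y) = det2 x y)
    {T : ℝ} (hT : 0 < T) (hpB : ∀ θ, p (θ + T) = B (p θ)) {k : ℕ} (hk : Odd k) :
    ∃ lam : ℝ, 0 < lam ∧
      (∀ u : ℝ → ℝ, IsCycloidSol p lam u → ∀ θ, u (θ + 2 * T) = -u θ) ∧
      (∀ u : ℝ → ℝ, IsCycloidSol p lam u → u ≠ 0 →
        {θ ∈ Ico (0 : ℝ) (4 * T) | u θ = 0}.ncard = 2 * k) := by
  have hp3 : ContDiff ℝ ((2 : ℕ) + 1) p := by simpa [two_add_one_eq_three] using hp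
  have hpos' : ∀ θ, arealSpeed p θ ≠ 0 := fun θ => (hpos θ).ne'
  have hq : ContDiff ℝ ((1 : ℕ) + 1) (dualQ p) := by
    simpa [one_add_one_eq_two] using contDiff_dualQ hp3 hpos'
  have hqpos (θ : ℝ) : 0 < arealSpeed (dualQ p) θ := by
    rw [arealSpeed_dualQ (hp.of_le (by norm_num)) (hpos' θ)]
    exact mul_pos (pow_pos (inv_pos.mpr (hpos θ)) 2) (hconv θ)
  have hpdiff : Differentiable ℝ p := hp.differentiable three_ne_zero
  have hqdiff : Differentiable ℝ (dualQ p) := hq.differentiable (by norm_num)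
  have hpT : Periodic (arealSpeed p) T := periodic_arealSpeed_of_equivariant hpdiff hpB hB
  have hqT : Periodic (arealSpeed (dualQ p)) T :=
    periodic_arealSpeed_of_equivariant hqdiff (dualQ_add_of_equivariant hpdiff hpB hB) hB
  obtain ⟨a, ha⟩ := exists_coe_boundedContinuousFunction_eq (contDiff_arealSpeed hp3).continuous
    hT.ne' hpT
  obtain ⟨b, hb⟩ := exists_coe_boundedContinuousFunction_eq (contDiff_arealSpeed hq).continuous
    hT.ne' hqT
  obtain ⟨μ, hμ, hsol⟩ := exists_smul_antiperiodic_ncard_zeros_eq (a := a) (b := b)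
    (ha ▸ hpos) (hb ▸ hqpos) hT (ha ▸ hpT) (hb ▸ hqT) hk
  rw [BoundedContinuousFunction.coe_smul, BoundedContinuousFunction.coe_smul, ha, hb] at hsol
  have hcurve {u : ℝ → ℝ} (hu : IsCycloidSol p (μ ^ 2) u) := hu.isIntegralCurve_hamiltonianField
    hpos' (fun θ => (hqpos θ).ne') ((contDiff_arealSpeed hq).differentiable one_ne_zero) hμ.ne'
  refine ⟨μ ^ 2, by positivity, fun u hu θ => congrArg Prod.fst ((hsol _ (hcurve hu)).1 θ),
    fun u hu hne => (hsol _ (hcurve hu)).2 fun h => hne ?_⟩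
  exact funext fun θ => congrArg Prod.fst (congrFun h θ)

/-- if the unit circle is invariant under the rotation by `π/2`
(a linear map `B` with `B² = -Id`), then for every odd `k ≥ 1` there is `λ > 0`
such that every solution of the cycloid equation with parameter `λ` is
anti-`π`-periodic (hence `2π`-periodic; `λ` is a double eigenvalue), and every
nonzero solution has exactly `2k` distinct zeros in `[0, 2π)`. -/
theorem stmt_17 (p : ℝ → ℝ × ℝ) (hP : IsUnitCircle p)
    (hrot : ∀ θ, p (θ + π / 2) = (-(p θ).2, (p θ).1))
    (k : ℕ) (hodd : Odd k) (hk : 1 ≤ k) :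
    ∃ lam : ℝ, 0 < lam ∧
      (∀ u : ℝ → ℝ, IsCycloidSol p lam u → ∀ θ, u (θ + π) = -u θ) ∧
      (∀ u : ℝ → ℝ, IsCycloidSol p lam u → u ≠ 0 →
        {θ ∈ Set.Ico (0:ℝ) (2 * π) | u θ = 0}.ncard = 2 * k) := by
  have hB (x y : ℝ × ℝ) : det2 (-x.2, x.1) (-y.2, y.1) = det2 x y := by simp only [det2]; ring
  simpa only [show 2 * (π / 2) = π by ring, show 4 * (π / 2) = 2 * π by ring] using
    stmt_17_general (B := (-ContinuousLinearMap.snd ℝ ℝ ℝ).prod (ContinuousLinearMap.fst ℝ ℝ ℝ))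
      (contDiff_infty.mp hP.1 3) hP.2.2.1 hP.2.2.2 hB pi_div_two_pos hrot hodd
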